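/- Lemma 3, Case 4 (edge insertion, vertex outside the affected sub-communities is unaffected): Let m, α, γ, w, a, b be real numbers with m > 0, α > 0, γ > 0 and w > 0. If the pre-update removal gain is nonpositive, i.e. −w/(2·m) + γ·a·b/(4·m²) ≤ 0, then the post-insertion removal gain is strictly negative, i.e. −w/(2·(m + α)) + γ·a·b/(4·(m + α)²) < 0. -/

import Mathlib

/-!
Over the common denominator, the removal gain is `(γ * a * b - 2 * m * w) / (4 * m ^ 2)`, so its
sign compares `γ * a * b` with the threshold `2 * m * w`. Inserting an edge elsewhere in the graph
leaves the former unchanged and, since `0 < w`, strictly raises the latter.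
-/

/-- The modularity gain `ΔM(v → ∅, γ)` of moving a vertex `v` out of its sub-community, at
resolution `γ` in a graph of total edge weight `m`; `v` is locally optimized when it is nonpositive.
Only the data entering the formula are kept: `w` is the weight between `v` and the intermediate
merge subsequence `U`, and `a`, `b` are the weighted degrees of `v` and `U`. At `m = 0` both
fractions take the junk value `0`. -/
def removalGain {K : Type*} [Field K] (γ m w a b : K) : K :=
  -w / (2 * m) + γ * a * b / (4 * m ^ 2)

theorem removalGain_eq_div {K : Type*} [Field K] [NeZero (2 : K)] {m : K} (hm : m ≠ 0)
    (γ w a b : K) :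
    removalGain γ m w a b = (γ * a * b - 2 * m * w) / (4 * m ^ 2) := by
  have two_ne : (2 : K) ≠ 0 := two_ne_zero
  have four_eq : (4 : K) = 2 * 2 := by norm_num
  rw [removalGain, four_eq]
  field_simp
  ring

section LinearOrderedField

variable {K : Type*} [Field K] [LinearOrder K] [IsStrictOrderedRing K] {γ m m' w a b : K}

theorem removalGain_nonpos_iff (hm : 0 < m) :
    removalGain γ m w a b ≤ 0 ↔ γ * a * b ≤ 2 * m * w := by
  have denom_pos : 0 < 4 * m ^ 2 := by positivity
  rw [removalGain_eq_div hm.ne', div_le_iff₀ denom_pos, zero_mul, sub_nonpos]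

theorem removalGain_neg_iff (hm : 0 < m) :
    removalGain γ m w a b < 0 ↔ γ * a * b < 2 * m * w := by
  have denom_pos : 0 < 4 * m ^ 2 := by positivity
  rw [removalGain_eq_div hm.ne', div_lt_iff₀ denom_pos, zero_mul, sub_neg]

theorem lemma3_case4_insertion_outside_vertex_general (hm : 0 < m) (hmm' : m < m') (hw : 0 < w)
    (hpre : removalGain γ m w a b ≤ 0) : removalGain γ m' w a b < 0 := by
  rw [removalGain_neg_iff (hm.trans hmm')]
  calc
    γ * a * b ≤ 2 * m * w := (removalGain_nonpos_iff hm).mp hpre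
    _ < 2 * m' * w := by gcongr

end LinearOrderedField

theorem lemma3_case4_insertion_outside_vertex
    (m α γ w a b : ℝ)
    (hm : 0 < m) (hα : 0 < α) (hγ : 0 < γ) (hw : 0 < w)
    (hpre : -w / (2 * m) + γ * a * b / (4 * m ^ 2) ≤ 0) :
    -w / (2 * (m + α)) + γ * a * b / (4 * (m + α) ^ 2) < 0 :=
  lemma3_case4_insertion_outside_vertex_general hm (lt_add_of_pos_right m hα) hw hpre
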